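/- Let f : [a, b] → ℝ be twice continuously differentiable with 0 < m ≤ f''(x) ≤ M for all x ∈ [a, b]. Let u < v be points of [a, b], let ℓ be the affine interpolant of f through (u, f(u)) and (v, f(v)), and for y ∈ (u, v) let ℓ_y be the piecewise linear interpolant of f with nodes u, y, v (affine on [u, y] and on [y, v], matching f at u, y, v). Define J(p) = ℓ(p) − f(p) ≥ 0 and J_y(p) = ℓ_y(p) − f(p) ≥ 0 for p ∈ [u, v]. Then for every p ∈ (u, v), J(p) − J_y(p) ≥ (m/M) [ ((v − y)/(v − p)) · 1_{(u, y)}(p) + ((y − u)/(p − u)) · 1_{(y, v)}(p) ] · J(p) ≥ 0; moreover J_y(y) = 0. -/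

import Mathlib

open Set

lemma chord_aux (a b : ℝ) (g g' g'' : ℝ → ℝ)
    (hg : ∀ x ∈ Set.Icc a b, HasDerivWithinAt g (g' x) (Set.Icc a b) x)
    (hg' : ∀ x ∈ Set.Icc a b, HasDerivWithinAt g' (g'' x) (Set.Icc a b) x)
    (h0 : ∀ x ∈ Set.Icc a b, 0 ≤ g'' x)
    (u v p : ℝ) (hu : u ∈ Set.Icc a b) (hv : v ∈ Set.Icc a b) (huv : u < v)
    (hp : p ∈ Set.Icc u v) :
    (v - u) * g p ≤ (v - p) * g u + (p - u) * g v := by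
  have hc : ConvexOn ℝ (Set.Icc a b) g := by
    refine convexOn_of_hasDerivWithinAt2_nonneg (f' := g') (f'' := g'') (convex_Icc a b)
      (fun x hx => (hg x hx).continuousWithinAt) ?_ ?_ ?_
    · intro x hx
      exact (hg x (interior_subset hx)).mono interior_subset
    · intro x hx
      exact (hg' x (interior_subset hx)).mono interior_subset
    · intro x hx
      exact h0 x (interior_subset hx)
  have hvu : 0 < v - u := sub_pos.2 huv
  have ha : 0 ≤ (v - p) / (v - u) := div_nonneg (by linarith [hp.2]) hvu.le
  have hb : 0 ≤ (p - u) / (v - u) := div_nonneg (by linarith [hp.1]) hvu.le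
  have h := hc.2 hu hv ha hb (by field_simp; ring)
  have e : ((v - p) / (v - u)) • u + ((p - u) / (v - u)) • v = p := by
    simp only [smul_eq_mul]; field_simp; ring
  rw [e] at h
  simp only [smul_eq_mul] at h
  have h2 := mul_le_mul_of_nonneg_left h hvu.le
  calc (v - u) * g p ≤ _ := h2
    _ = _ := by field_simp

lemma chord_bounds (a b m M : ℝ) (f f' f'' : ℝ → ℝ)
    (hf' : ∀ x ∈ Set.Icc a b, HasDerivWithinAt f (f' x) (Set.Icc a b) x)
    (hf'' : ∀ x ∈ Set.Icc a b, HasDerivWithinAt f' (f'' x) (Set.Icc a b) x)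
    (hbound : ∀ x ∈ Set.Icc a b, m ≤ f'' x ∧ f'' x ≤ M)
    (u v p : ℝ) (hu : u ∈ Set.Icc a b) (hv : v ∈ Set.Icc a b) (huv : u < v)
    (hp : p ∈ Set.Icc u v) :
    m / 2 * ((p - u) * (v - p)) ≤ (f u + (f v - f u) / (v - u) * (p - u)) - f p ∧
    (f u + (f v - f u) / (v - u) * (p - u)) - f p ≤ M / 2 * ((p - u) * (v - p)) := by
  have hvu : 0 < v - u := sub_pos.2 huv
  have q1 : ∀ (c x : ℝ), HasDerivWithinAt (fun x => c / 2 * x ^ 2) (c * x) (Set.Icc a b) x := by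
    intro c x
    have := ((hasDerivAt_pow 2 x).const_mul (c / 2)).hasDerivWithinAt (s := Set.Icc a b)
    exact this.congr_deriv (by norm_num; ring)
  have q2 : ∀ (c x : ℝ), HasDerivWithinAt (fun x => c * x) c (Set.Icc a b) x := by
    intro c x
    simpa using ((hasDerivAt_id x).const_mul c).hasDerivWithinAt (s := Set.Icc a b)
  have h1 := chord_aux a b (fun x => f x - m / 2 * x ^ 2) (fun x => f' x - m * x)
    (fun x => f'' x - m) (fun x hx => (hf' x hx).sub (q1 m x))
    (fun x hx => (hf'' x hx).sub (q2 m x)) (fun x hx => by linarith [(hbound x hx).1])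
    u v p hu hv huv hp
  have h2 := chord_aux a b (fun x => M / 2 * x ^ 2 - f x) (fun x => M * x - f' x)
    (fun x => M - f'' x) (fun x hx => (q1 M x).sub (hf' x hx))
    (fun x hx => (q2 M x).sub (hf'' x hx)) (fun x hx => by linarith [(hbound x hx).2])
    u v p hu hv huv hp
  have e : (v - u) * ((f u + (f v - f u) / (v - u) * (p - u)) - f p)
      = (v - p) * f u + (p - u) * f v - (v - u) * f p := by
    field_simp; ring
  constructor
  · refine le_of_mul_le_mul_left ?_ hvu
    rw [e]; nlinarith
  · refine le_of_mul_le_mul_left ?_ hvu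
    rw [e]; nlinarith

/-- **Statement 17.** Let `f : [a,b] → ℝ` be twice continuously differentiable with
`0 < m ≤ f'' ≤ M` on `[a,b]`, let `u < v` in `[a,b]`, `ℓ` the affine interpolant of `f`
through `(u, f(u))`, `(v, f(v))`, and for `y ∈ (u, v)` let `ℓ_y` be the piecewise linear
interpolant with nodes `u, y, v`. With `J(p) = ℓ(p) − f(p)` and `J_y(p) = ℓ_y(p) − f(p)`,
we have `J, J_y ≥ 0` on `[u, v]`, and for every `p ∈ (u, v)`,
`J(p) − J_y(p) ≥ (m/M)[((v−y)/(v−p))·1_{(u,y)}(p) + ((y−u)/(p−u))·1_{(y,v)}(p)]·J(p) ≥ 0`;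
moreover `J_y(y) = 0`. -/
theorem refined_interpolation_improvement
    (a b m M : ℝ) (hab : a < b) (f f' f'' : ℝ → ℝ)
    (hf' : ∀ x ∈ Set.Icc a b, HasDerivWithinAt f (f' x) (Set.Icc a b) x)
    (hf'' : ∀ x ∈ Set.Icc a b, HasDerivWithinAt f' (f'' x) (Set.Icc a b) x)
    (hf''cont : ContinuousOn f'' (Set.Icc a b))
    (hm : 0 < m) (hbound : ∀ x ∈ Set.Icc a b, m ≤ f'' x ∧ f'' x ≤ M)
    (u v y : ℝ) (hu : u ∈ Set.Icc a b) (hv : v ∈ Set.Icc a b) (huv : u < v)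
    (hy : y ∈ Set.Ioo u v)
    (J Jy : ℝ → ℝ)
    (hJ : ∀ p : ℝ, J p = (f u + (f v - f u) / (v - u) * (p - u)) - f p)
    (hJy : ∀ p : ℝ, Jy p =
      (if p ≤ y then f u + (f y - f u) / (y - u) * (p - u)
       else f y + (f v - f y) / (v - y) * (p - y)) - f p) :
    (∀ p ∈ Set.Icc u v, 0 ≤ J p ∧ 0 ≤ Jy p) ∧
    (∀ p ∈ Set.Ioo u v,
      m / M * ((v - y) / (v - p) * Set.indicator (Set.Ioo u y) (fun _ => (1 : ℝ)) p
          + (y - u) / (p - u) * Set.indicator (Set.Ioo y v) (fun _ => (1 : ℝ)) p) * J p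
        ≤ J p - Jy p ∧
      0 ≤ m / M * ((v - y) / (v - p) * Set.indicator (Set.Ioo u y) (fun _ => (1 : ℝ)) p
          + (y - u) / (p - u) * Set.indicator (Set.Ioo y v) (fun _ => (1 : ℝ)) p) * J p) ∧
    Jy y = 0 := by
  have hya : y ∈ Set.Icc a b := ⟨by linarith [hu.1, hy.1], by linarith [hv.2, hy.2]⟩
  have hM : 0 < M := by linarith [(hbound u hu).1, (hbound u hu).2]
  have hyu : 0 < y - u := sub_pos.2 hy.1
  have hvy : 0 < v - y := sub_pos.2 hy.2
  have hvu : 0 < v - u := sub_pos.2 huv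
  have B := chord_bounds a b m M f f' f'' hf' hf'' hbound
  have hJ1 : ∀ p ∈ Set.Icc u v, m / 2 * ((p - u) * (v - p)) ≤ J p := fun p hp => by
    rw [hJ]; exact (B u v p hu hv huv hp).1
  have hJ2 : ∀ p ∈ Set.Icc u v, J p ≤ M / 2 * ((p - u) * (v - p)) := fun p hp => by
    rw [hJ]; exact (B u v p hu hv huv hp).2
  have hJ0 : ∀ p ∈ Set.Icc u v, 0 ≤ J p := fun p hp => by
    have h1 : 0 ≤ p - u := sub_nonneg.2 hp.1
    have h2 : 0 ≤ v - p := sub_nonneg.2 hp.2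
    exact le_trans (by positivity) (hJ1 p hp)
  have hyJ := hJ1 y ⟨hy.1.le, hy.2.le⟩
  have hyy : Jy y = 0 := by
    rw [hJy, if_pos le_rfl]; field_simp; ring
  refine ⟨fun p hp => ⟨hJ0 p hp, ?_⟩, ?_, hyy⟩
  · rw [hJy]
    have h1 : 0 ≤ p - u := sub_nonneg.2 hp.1
    have h2 : 0 ≤ v - p := sub_nonneg.2 hp.2
    split_ifs with h
    · have h3 : 0 ≤ y - p := sub_nonneg.2 h
      exact le_trans (by positivity) (B u y p hu hya hy.1 ⟨hp.1, h⟩).1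
    · have h3 : 0 ≤ p - y := by linarith
      exact le_trans (by positivity) (B y v p hya hv hy.2 ⟨by linarith, hp.2⟩).1
  · intro p hp
    have hp' : p ∈ Set.Icc u v := ⟨hp.1.le, hp.2.le⟩
    have h1 : 0 < p - u := sub_pos.2 hp.1
    have h2 : 0 < v - p := sub_pos.2 hp.2
    have hj := hJ0 p hp'
    have hj2 := hJ2 p hp'
    rcases lt_trichotomy p y with h | h | h
    · rw [Set.indicator_of_mem (show p ∈ Set.Ioo u y from ⟨hp.1, h⟩),
        Set.indicator_of_notMem (show p ∉ Set.Ioo y v from fun k => absurd k.1 h.not_gt)]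
      refine ⟨?_, by positivity⟩
      have e : J p - Jy p = (p - u) / (y - u) * J y := by
        rw [hJ, hJ, hJy, if_pos h.le]; field_simp; ring
      rw [e]
      calc _ = m / M * ((v - y) / (v - p)) * J p := by ring
        _ ≤ m / M * ((v - y) / (v - p)) * (M / 2 * ((p - u) * (v - p))) := by gcongr
        _ = (p - u) / (y - u) * (m / 2 * ((y - u) * (v - y))) := by field_simp
        _ ≤ _ := by gcongr
    · subst h
      simp [hyy, hj]
    · rw [Set.indicator_of_notMem (show p ∉ Set.Ioo u y from fun k => absurd k.2 h.not_gt),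
        Set.indicator_of_mem (show p ∈ Set.Ioo y v from ⟨h, hp.2⟩)]
      refine ⟨?_, by positivity⟩
      have e : J p - Jy p = (v - p) / (v - y) * J y := by
        rw [hJ, hJ, hJy, if_neg h.not_ge]; field_simp; ring
      rw [e]
      calc _ = m / M * ((y - u) / (p - u)) * J p := by ring
        _ ≤ m / M * ((y - u) / (p - u)) * (M / 2 * ((p - u) * (v - p))) := by gcongr
        _ = (v - p) / (v - y) * (m / 2 * ((y - u) * (v - y))) := by field_simp
        _ ≤ _ := by gcongr
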